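/- Let 0 < β_L ≤ β_R, T_L = 1/β_L, T_R = 1/β_R, κ = (√(πβ_L/2)+√(πβ_R/2))^{−1}, j* = κ(T_L − T_R), f the cumulant generating function and I(j) = sup_{λ∈ℝ}(λ j − f(λ)) its Legendre transform. Then I is nonnegative, convex and finite on all of ℝ, and I is infinitely differentiable and strictly convex on ℝ ∖ [−j*, j*]. -/

import Mathlib

open MeasureTheory

/-- `C(x,η) = ∫₀^∞ v e^{−η/v − x v²/2} dv`. -/
noncomputable def Ccal (x η : ℝ) : ℝ :=
  ∫ v in Set.Ioi (0 : ℝ), v * Real.exp (-η / v - x * v ^ 2 / 2)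

/-- `F(λ,η) = β_L β_R C(β_R+λ, η) C(β_L−λ, η)`. -/
noncomputable def Fcal (βL βR lam η : ℝ) : ℝ :=
  βL * βR * Ccal (βR + lam) η * Ccal (βL - lam) η

/-- `f : ℝ → [0,∞]` is the cumulant generating function of the current:
`f(λ)` is the unique positive solution of `F(λ, f(λ)) = 1` on
`(−β_R, β_L) ∖ [β_L−β_R, 0]`, `f ≡ 0` on the interval between `β_L−β_R` and `0`,
and `f ≡ +∞` outside `(−β_R, β_L)`. -/
def IsCGF (βL βR : ℝ) (f : ℝ → EReal) : Prop :=
  (∀ lam ∈ Set.uIcc (βL - βR) 0, f lam = 0) ∧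
  (∀ lam ∈ Set.Ioo (-βR) βL \ Set.uIcc (βL - βR) 0,
      ∃ η : ℝ, 0 < η ∧ Fcal βL βR lam η = 1 ∧ f lam = (η : EReal)) ∧
  (∀ lam ∉ Set.Ioo (-βR) βL, f lam = ⊤)

/-- Legendre transform `I(j) = sup_λ (λ j − f(λ))`. -/
noncomputable def legendre (f : ℝ → EReal) (j : ℝ) : EReal :=
  ⨆ lam : ℝ, ((lam * j : ℝ) : EReal) - f lam

/-! Write `K n x η = ∫₀^∞ v ^ n e^{−η/v − x v²/2} dv`, so that `C = K 1`. Since `∂K n/∂x` and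
`∂K n/∂η` are `−K (n + 2) / 2` and `−K (n − 1)`, the function `F` is smooth, and `∂F/∂η < 0`; hence
`f` is smooth where it is finite and positive. Differentiating `log F(λ, f λ) = 0` twice writes
`f''` as a sum of two variances divided by a positive factor, so `f'' > 0` there.

The derivative at `0` of `λ ↦ log F(λ, λ j)`, a combination of moments at `η = 0`, is negative for
`j > j*`. Thus `f λ < λ j` for some `λ ∈ (0, β_L)`, and since `f` blows up at `β_L` the supremum
defining `I j` is attained in `(0, β_L)`, at the solution of `f' λ = j`. Smoothness and strict
convexity of `I` on `(j*, ∞)` follow by inverting `f'`. The symmetry of `f` under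
`λ ↦ β_L − β_R − λ` gives `I (−j) = I j − (β_L − β_R) j`, which handles `j < −j*`. -/

open Filter Set Topology
open scoped ContDiff

section Calculus

lemma setIntegral_pos_of_ne_zero {X : Type*} [TopologicalSpace X] [MeasurableSpace X]
    [OpensMeasurableSpace X] {μ : Measure X} [μ.IsOpenPosMeasure] {U : Set X} {g : X → ℝ} {x : X}
    (hU : IsOpen U) (hg : ContinuousOn g U) (hg0 : ∀ y ∈ U, 0 ≤ g y) (hgi : IntegrableOn g U μ)
    (hx : x ∈ U) (hgx : g x ≠ 0) : 0 < ∫ y in U, g y ∂μ := by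
  have hae : 0 ≤ᵐ[μ.restrict U] g := ae_restrict_of_forall_mem hU.measurableSet hg0
  refine (integral_nonneg_of_ae hae).lt_of_ne fun h => hgx ?_
  have hzero : g =ᵐ[μ.restrict U] 0 := (integral_eq_zero_iff_of_nonneg_ae hae hgi).1 h.symm
  exact Measure.eqOn_open_of_ae_eq hzero hU hg continuousOn_const hx

lemma sq_setIntegral_mul_lt {X : Type*} [TopologicalSpace X] [MeasurableSpace X]
    [OpensMeasurableSpace X] {μ : Measure X} [μ.IsOpenPosMeasure] {U : Set X} {g w : X → ℝ}
    {x y : X} (hU : IsOpen U) (hg : ContinuousOn g U) (hw : ContinuousOn w U)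
    (hw0 : ∀ z ∈ U, 0 < w z) (hwi : IntegrableOn w U μ)
    (hgw : IntegrableOn (fun z => g z * w z) U μ)
    (hggw : IntegrableOn (fun z => g z ^ 2 * w z) U μ)
    (hx : x ∈ U) (hy : y ∈ U) (hxy : g x ≠ g y) :
    (∫ z in U, g z * w z ∂μ) ^ 2 < (∫ z in U, w z ∂μ) * ∫ z in U, g z ^ 2 * w z ∂μ := by
  have hW : 0 < ∫ z in U, w z ∂μ :=
    setIntegral_pos_of_ne_zero hU hw (fun z hz => (hw0 z hz).le) hwi hx (hw0 x hx).ne'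
  have hexpand (t z : ℝ) (u : ℝ) : (z - t) ^ 2 * u = t ^ 2 * u - 2 * t * (z * u) + z ^ 2 * u := by
    ring
  have hint (t : ℝ) : IntegrableOn (fun z => (g z - t) ^ 2 * w z) U μ := by
    simp only [hexpand]
    exact ((hwi.const_mul _).sub (hgw.const_mul _)).add hggw
  have hquad (t : ℝ) : ∫ z in U, (g z - t) ^ 2 * w z ∂μ =
      (∫ z in U, w z ∂μ) * (t * t) + (-2 * ∫ z in U, g z * w z ∂μ) * t +
        ∫ z in U, g z ^ 2 * w z ∂μ := by
    have hsub : IntegrableOn (fun z => t ^ 2 * w z - 2 * t * (g z * w z)) U μ :=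
      (hwi.const_mul _).sub (hgw.const_mul _)
    simp only [hexpand]
    rw [integral_add hsub hggw, integral_sub (hwi.const_mul _) (hgw.const_mul _),
      integral_const_mul, integral_const_mul]
    ring
  have hpos (t : ℝ) : 0 < ∫ z in U, (g z - t) ^ 2 * w z ∂μ := by
    obtain ⟨z, hz, hzt⟩ : ∃ z ∈ U, g z ≠ t := by
      by_contra! h
      exact hxy ((h x hx).trans (h y hy).symm)
    exact setIntegral_pos_of_ne_zero hU (((hg.sub continuousOn_const).pow 2).mul hw)
      (fun z hz => mul_nonneg (sq_nonneg _) (hw0 z hz).le) (hint t) hz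
      (mul_ne_zero (pow_ne_zero _ (sub_ne_zero.2 hzt)) (hw0 z hz).ne')
  have hdiscrim := discrim_lt_zero hW.ne' fun t => (hquad t) ▸ hpos t
  rw [discrim] at hdiscrim
  linarith

lemma contDiffAt_of_eventually_apply_eq {E : Type*} [NormedAddCommGroup E] [NormedSpace ℝ E]
    [CompleteSpace E] {F : E × ℝ → ℝ} {φ : E → ℝ} {x : E} {c : ℝ} {n : WithTop ℕ∞} {V : Set ℝ}
    (hn : n ≠ 0) (hF : ContDiffAt ℝ n F (x, φ x))
    (hc : HasDerivAt (fun s => F (x, s)) c (φ x)) (hc0 : c ≠ 0) (hV : V ∈ 𝓝 (φ x))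
    (hinj : ∀ᶠ y in 𝓝 x, InjOn (fun s => F (y, s)) V)
    (hφ : ∀ᶠ y in 𝓝 x, φ y ∈ V ∧ F (y, φ y) = F (x, φ x)) : ContDiffAt ℝ n φ x := by
  have hpartial : fderiv ℝ F (x, φ x) (0, 1) = c :=
    ((hF.differentiableAt hn).hasFDerivAt.comp_hasDerivAt (φ x)
      ((hasDerivAt_const (φ x) x).prodMk (hasDerivAt_id (φ x)))).unique hc
  have hinv : (fderiv ℝ F (x, φ x) ∘L .inr ℝ E ℝ).IsInvertible := by
    refine ⟨ContinuousLinearEquiv.unitsEquivAut ℝ (Units.mk0 c hc0), ?_⟩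
    ext
    simp [hpartial]
  have hψ := hF.contDiffAt_implicitFunction hn hinv
  have hψV : ∀ᶠ y in 𝓝 x, hF.implicitFunction hn hinv y ∈ V :=
    hψ.continuousAt.eventually ((hF.implicitFunction_apply_self hn hinv).symm ▸ hV)
  refine hψ.congr_of_eventuallyEq ?_
  filter_upwards [hF.eventually_apply_implicitFunction hn hinv, hψV, hinj, hφ]
    with y hFψ hyψ hy hyφ
  exact hy hyφ.1 hyψ (hyφ.2.trans hFψ.symm)

lemma eventually_lt_of_tendsto_deriv_neg {f f' : ℝ → ℝ} {a e : ℝ}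
    (hf : ContinuousWithinAt f (Ioi a) a) (hd : ∀ᶠ x in 𝓝[>] a, HasDerivAt f (f' x) x)
    (hlim : Tendsto f' (𝓝[>] a) (𝓝 e)) (he : e < 0) : ∀ᶠ x in 𝓝[>] a, f x < f a := by
  have hderiv : HasDerivWithinAt f e (Ici a) a := by
    refine hasDerivWithinAt_Ici_of_tendsto_deriv (s := {x | a < x ∧ HasDerivAt f (f' x) x})
      (fun x hx => hx.2.differentiableAt.differentiableWithinAt)
      (hf.mono fun x hx => hx.1) ?_ (hlim.congr' ?_)
    · filter_upwards [self_mem_nhdsWithin, hd] with x hax hx using ⟨hax, hx⟩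
    filter_upwards [hd] with x hx using hx.deriv.symm
  have hslope := (hasDerivWithinAt_iff_tendsto_slope' (lt_irrefl a)).1
    (hderiv.mono Ioi_subset_Ici_self)
  filter_upwards [hslope.eventually_lt_const he, self_mem_nhdsWithin] with x hx hax
  rw [slope_def_field, div_lt_iff₀ (sub_pos.2 hax), zero_mul] at hx
  exact sub_neg.1 hx

lemma exists_isMaxOn_Ioo_of_eventually_le {ψ : ℝ → ℝ} {a b x₀ : ℝ} (hψ : ContinuousOn ψ (Ioo a b))
    (hx₀ : x₀ ∈ Ioo a b) (ha : ∀ᶠ x in 𝓝[>] a, ψ x ≤ ψ x₀) (hb : ∀ᶠ x in 𝓝[<] b, ψ x ≤ ψ x₀) :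
    ∃ x ∈ Ioo a b, IsMaxOn ψ (Ioo a b) x := by
  obtain ⟨u, hu, hua⟩ := (mem_nhdsGT_iff_exists_Ioo_subset' hx₀.1).1 ha
  obtain ⟨v, hv, hvb⟩ := (mem_nhdsLT_iff_exists_Ioo_subset' hx₀.2).1 hb
  have hsub : Icc (min u x₀) (max v x₀) ⊆ Ioo a b :=
    Icc_subset_Ioo (lt_min hu hx₀.1) (max_lt hv hx₀.2)
  have hx₀mem : x₀ ∈ Icc (min u x₀) (max v x₀) := ⟨min_le_right _ _, le_max_right _ _⟩
  obtain ⟨x, hx, hmax⟩ := isCompact_Icc.exists_isMaxOn ⟨x₀, hx₀mem⟩ (hψ.mono hsub)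
  rw [isMaxOn_iff] at hmax
  refine ⟨x, hsub hx, fun y hy => ?_⟩
  by_cases hyu : y < u
  · exact (hua ⟨hy.1, hyu⟩).trans (hmax x₀ hx₀mem)
  by_cases hyv : v < y
  · exact (hvb ⟨hyv, hy.2⟩).trans (hmax x₀ hx₀mem)
  exact hmax y ⟨min_le_of_left_le (not_lt.1 hyu), le_max_of_le_left (not_lt.1 hyv)⟩

end Calculus

section Kernel

/-- The integrand `v ^ n * e^{−η/v − x v²/2}`; the kernel of `C(x, η)` is the case `n = 1`. -/
noncomputable def kernelWeight (n : ℤ) (x η v : ℝ) : ℝ :=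
  v ^ n * Real.exp (-η / v - x * v ^ 2 / 2)

/-- The moments `∫₀^∞ v ^ n e^{−η/v − x v²/2} dv`. All partial derivatives of `C` are, up to
constants, of this form. -/
noncomputable def kernelMoment (n : ℤ) (x η : ℝ) : ℝ :=
  ∫ v in Ioi (0 : ℝ), kernelWeight n x η v

lemma Ccal_eq_kernelMoment (x η : ℝ) : Ccal x η = kernelMoment 1 x η := by
  simp only [Ccal, kernelMoment, kernelWeight, zpow_one]

variable {n : ℤ} {x η v : ℝ}

lemma kernelWeight_pos (n : ℤ) (x η : ℝ) (hv : 0 < v) : 0 < kernelWeight n x η v := by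
  unfold kernelWeight
  positivity

lemma kernelWeight_anti {x' η' : ℝ} (n : ℤ) (hx : x ≤ x') (hη : η ≤ η') (hv : 0 < v) :
    kernelWeight n x' η' v ≤ kernelWeight n x η v := by
  unfold kernelWeight
  gcongr

lemma kernelWeight_add (n m : ℤ) (x η : ℝ) (hv : 0 < v) :
    kernelWeight (n + m) x η v = v ^ m * kernelWeight n x η v := by
  rw [kernelWeight, kernelWeight, zpow_add₀ hv.ne']
  ring

lemma kernelWeight_eq_exp_mul (n : ℤ) (x η v : ℝ) :
    kernelWeight n x η v = Real.exp (-(η / v)) * kernelWeight n x 0 v := by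
  rw [kernelWeight, kernelWeight, mul_left_comm, ← Real.exp_add]
  congr 2
  ring

lemma kernelWeight_zero_right (n : ℤ) (x v : ℝ) :
    kernelWeight n x 0 v = v ^ n * Real.exp (-(x / 2) * v ^ 2) := by
  rw [kernelWeight]
  congr 2
  ring

lemma continuousOn_kernelWeight (n : ℤ) (x η : ℝ) : ContinuousOn (kernelWeight n x η) (Ioi 0) := by
  intro v hv
  have hv0 : v ≠ 0 := ne_of_gt hv
  have hzpow := continuousAt_zpow₀ v n (Or.inl hv0)
  unfold kernelWeight
  exact ContinuousAt.continuousWithinAt (by fun_prop (disch := assumption))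

lemma aestronglyMeasurable_kernelWeight (n : ℤ) (x η : ℝ) :
    AEStronglyMeasurable (kernelWeight n x η) (volume.restrict (Ioi 0)) :=
  (continuousOn_kernelWeight n x η).aestronglyMeasurable measurableSet_Ioi

lemma integrableOn_kernelWeight_of_nonneg (hn : 0 ≤ n) (hx : 0 < x) (hη : 0 ≤ η) :
    IntegrableOn (kernelWeight n x η) (Ioi 0) := by
  lift n to ℕ using hn
  have hgauss := integrableOn_rpow_mul_exp_neg_mul_sq (half_pos hx) (s := (n : ℝ))
    (by linarith [n.cast_nonneg (α := ℝ)])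
  refine Integrable.mono' hgauss (aestronglyMeasurable_kernelWeight _ _ _) ?_
  filter_upwards [ae_restrict_mem measurableSet_Ioi] with v hv
  rw [Real.norm_of_nonneg (kernelWeight_pos _ _ _ hv).le]
  refine (kernelWeight_anti _ le_rfl hη hv).trans_eq ?_
  rw [kernelWeight_zero_right, zpow_natCast, Real.rpow_natCast]

lemma kernelWeight_neg_le (m : ℕ) (x : ℝ) (hη : 0 < η) (hv : 0 < v) :
    kernelWeight (-m) x η v ≤ m.factorial / η ^ m * kernelWeight 0 x 0 v := by
  have hexp : v ^ (-(m : ℤ)) * Real.exp (-(η / v)) ≤ m.factorial / η ^ m := by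
    rw [zpow_neg, zpow_natCast, Real.exp_neg, ← mul_inv,
      inv_le_comm₀ (by positivity) (by positivity)]
    calc (m.factorial / η ^ m : ℝ)⁻¹ = v ^ m * ((η / v) ^ m / m.factorial) := by
          rw [div_pow]
          field_simp
      _ ≤ v ^ m * Real.exp (η / v) := by
          gcongr
          exact Real.pow_div_factorial_le_exp (η / v) (by positivity) m
  have hweight : kernelWeight (-m) x η v =
      v ^ (-(m : ℤ)) * Real.exp (-(η / v)) * kernelWeight 0 x 0 v := by
    rw [mul_assoc, ← kernelWeight_eq_exp_mul, ← kernelWeight_add _ _ _ _ hv, zero_add]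
  rw [hweight]
  exact mul_le_mul_of_nonneg_right hexp (kernelWeight_pos _ _ _ hv).le

lemma integrableOn_kernelWeight (n : ℤ) (hx : 0 < x) (hη : 0 < η) :
    IntegrableOn (kernelWeight n x η) (Ioi 0) := by
  obtain ⟨m, rfl | rfl⟩ := n.eq_nat_or_neg
  · exact integrableOn_kernelWeight_of_nonneg m.cast_nonneg hx hη.le
  refine Integrable.mono' ((integrableOn_kernelWeight_of_nonneg le_rfl hx le_rfl).const_mul
    (m.factorial / η ^ m)) (aestronglyMeasurable_kernelWeight _ _ _) ?_
  filter_upwards [ae_restrict_mem measurableSet_Ioi] with v hv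
  rw [Real.norm_of_nonneg (kernelWeight_pos _ _ _ hv).le]
  exact kernelWeight_neg_le m x hη hv

lemma kernelMoment_pos (n : ℤ) (hx : 0 < x) (hη : 0 < η) : 0 < kernelMoment n x η :=
  setIntegral_pos_of_ne_zero isOpen_Ioi (continuousOn_kernelWeight n x η)
    (fun _ hv => (kernelWeight_pos n x η hv).le) (integrableOn_kernelWeight n hx hη)
    (mem_Ioi.2 one_pos) (kernelWeight_pos n x η one_pos).ne'

lemma hasFDerivAt_kernelWeight (n : ℤ) (q : ℝ × ℝ) (hv : 0 < v) :
    HasFDerivAt (fun q : ℝ × ℝ => kernelWeight n q.1 q.2 v)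
      (kernelWeight (n + 2) q.1 q.2 v • (-(1 / 2 : ℝ) • ContinuousLinearMap.fst ℝ ℝ ℝ) +
        kernelWeight (n - 1) q.1 q.2 v • (-ContinuousLinearMap.snd ℝ ℝ ℝ)) q := by
  have hexponent : HasFDerivAt (fun q : ℝ × ℝ => -q.2 / v - q.1 * v ^ 2 / 2)
      (-(v⁻¹ • ContinuousLinearMap.snd ℝ ℝ ℝ) - (v ^ 2 / 2) • ContinuousLinearMap.fst ℝ ℝ ℝ) q := by
    have hfst : HasFDerivAt (fun q : ℝ × ℝ => q.1) (ContinuousLinearMap.fst ℝ ℝ ℝ) q :=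
      hasFDerivAt_fst
    have hsnd : HasFDerivAt (fun q : ℝ × ℝ => q.2) (ContinuousLinearMap.snd ℝ ℝ ℝ) q :=
      hasFDerivAt_snd
    refine ((hsnd.mul_const v⁻¹).neg.sub (hfst.mul_const (v ^ 2 / 2))).congr_of_eventuallyEq
      (Eventually.of_forall fun q => ?_)
    simp only [Pi.sub_apply, Pi.neg_apply]
    ring
  refine (hexponent.exp.const_mul (v ^ n)).congr_fderiv ?_
  rw [sub_eq_add_neg n 1, kernelWeight_add n 2 _ _ hv, kernelWeight_add n (-1) _ _ hv, kernelWeight,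
    zpow_neg_one, zpow_ofNat]
  module

lemma hasFDerivAt_kernelMoment (n : ℤ) {p : ℝ × ℝ} (h₁ : 0 < p.1) (h₂ : 0 < p.2) :
    HasFDerivAt (fun q : ℝ × ℝ => kernelMoment n q.1 q.2)
      (kernelMoment (n + 2) p.1 p.2 • (-(1 / 2 : ℝ) • ContinuousLinearMap.fst ℝ ℝ ℝ) +
        kernelMoment (n - 1) p.1 p.2 • (-ContinuousLinearMap.snd ℝ ℝ ℝ)) p := by
  set A : ℝ × ℝ →L[ℝ] ℝ := -(1 / 2 : ℝ) • ContinuousLinearMap.fst ℝ ℝ ℝ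
  set B : ℝ × ℝ →L[ℝ] ℝ := -ContinuousLinearMap.snd ℝ ℝ ℝ
  have hint (m : ℤ) := integrableOn_kernelWeight m h₁ h₂
  have hint_half (m : ℤ) := integrableOn_kernelWeight m (half_pos h₁) (half_pos h₂)
  have hbound : ∀ v ∈ Ioi (0 : ℝ), ∀ q ∈ Ioi (p.1 / 2) ×ˢ Ioi (p.2 / 2),
      ‖kernelWeight (n + 2) q.1 q.2 v • A + kernelWeight (n - 1) q.1 q.2 v • B‖ ≤
        kernelWeight (n + 2) (p.1 / 2) (p.2 / 2) v * ‖A‖ +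
          kernelWeight (n - 1) (p.1 / 2) (p.2 / 2) v * ‖B‖ := by
    rintro v hv q ⟨hq₁, hq₂⟩
    refine (norm_add_le _ _).trans ?_
    rw [norm_smul _ A, norm_smul _ B, Real.norm_of_nonneg (kernelWeight_pos _ _ _ hv).le,
      Real.norm_of_nonneg (kernelWeight_pos _ _ _ hv).le]
    gcongr <;> exact kernelWeight_anti _ (le_of_lt hq₁) (le_of_lt hq₂) hv
  have hderiv := hasFDerivAt_integral_of_dominated_of_fderiv_le (𝕜 := ℝ)
    (prod_mem_nhds (Ioi_mem_nhds (half_lt_self h₁)) (Ioi_mem_nhds (half_lt_self h₂)))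
    (Eventually.of_forall fun q => aestronglyMeasurable_kernelWeight n q.1 q.2) (hint n)
    (((hint _).smul_const A).add ((hint _).smul_const B)).aestronglyMeasurable
    (ae_restrict_of_forall_mem measurableSet_Ioi hbound)
    (((hint_half _).mul_const _).add ((hint_half _).mul_const _))
    (ae_restrict_of_forall_mem measurableSet_Ioi fun v hv q _ => hasFDerivAt_kernelWeight n q hv)
  refine hderiv.congr_fderiv ?_
  rw [integral_add ((hint _).smul_const A) ((hint _).smul_const B), integral_smul_const,
    integral_smul_const, kernelMoment, kernelMoment]

lemma contDiffAt_kernelMoment (n : ℤ) {p : ℝ × ℝ} (h₁ : 0 < p.1) (h₂ : 0 < p.2) :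
    ContDiffAt ℝ ∞ (fun q : ℝ × ℝ => kernelMoment n q.1 q.2) p := by
  have hopen : IsOpen (Ioi (0 : ℝ) ×ˢ Ioi (0 : ℝ)) := isOpen_Ioi.prod isOpen_Ioi
  have hfinite (m : ℕ) : ∀ n : ℤ,
      ContDiffOn ℝ m (fun q : ℝ × ℝ => kernelMoment n q.1 q.2) (Ioi 0 ×ˢ Ioi 0) := by
    induction m with
    | zero =>
      intro n
      rw [Nat.cast_zero, contDiffOn_zero]
      exact fun q hq => (hasFDerivAt_kernelMoment n hq.1 hq.2).continuousAt.continuousWithinAt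
    | succ m ih =>
      intro n
      rw [Nat.cast_succ, contDiffOn_succ_iff_hasFDerivWithinAt_of_uniqueDiffOn hopen.uniqueDiffOn]
      exact ⟨by simp, _, ((ih (n + 2)).smul contDiffOn_const).add
        ((ih (n - 1)).smul contDiffOn_const),
        fun q hq => (hasFDerivAt_kernelMoment n hq.1 hq.2).hasFDerivWithinAt⟩
  exact (contDiffOn_infty.2 fun m => hfinite m n).contDiffAt (hopen.mem_nhds ⟨h₁, h₂⟩)

lemma hasDerivAt_kernelMoment_comp (n : ℤ) {x η : ℝ → ℝ} {x' η' t : ℝ} (hx : HasDerivAt x x' t)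
    (hη : HasDerivAt η η' t) (hx0 : 0 < x t) (hη0 : 0 < η t) :
    HasDerivAt (fun s => kernelMoment n (x s) (η s))
      (-(x' * kernelMoment (n + 2) (x t) (η t) / 2 + η' * kernelMoment (n - 1) (x t) (η t))) t := by
  refine ((hasFDerivAt_kernelMoment n (p := (x t, η t)) hx0 hη0).comp_hasDerivAt t
    (hx.prodMk hη)).congr_deriv ?_
  simp only [add_apply, smul_apply, neg_apply, ContinuousLinearMap.coe_fst',
    ContinuousLinearMap.coe_snd', smul_eq_mul]
  ring

lemma continuousOn_kernelMoment (h : IntegrableOn (kernelWeight n x η) (Ioi 0)) :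
    ContinuousOn (fun q : ℝ × ℝ => kernelMoment n q.1 q.2) (Ici x ×ˢ Ici η) := by
  refine continuousOn_of_dominated (fun q _ => aestronglyMeasurable_kernelWeight n q.1 q.2)
    (fun q hq => ae_restrict_of_forall_mem measurableSet_Ioi fun v hv => ?_) h
    (Eventually.of_forall fun v => ?_)
  · rw [Real.norm_of_nonneg (kernelWeight_pos _ _ _ hv).le]
    exact kernelWeight_anti n hq.1 hq.2 hv
  · unfold kernelWeight
    fun_prop

lemma tendsto_kernelMoment {α : Type*} {l : Filter α} {x η : α → ℝ} {x₀ η₀ : ℝ} (hn : 0 ≤ n)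
    (hx₀ : 0 < x₀) (hη₀ : 0 ≤ η₀) (hx : Tendsto x l (𝓝 x₀)) (hη : Tendsto η l (𝓝 η₀))
    (hη_nonneg : ∀ᶠ t in l, 0 ≤ η t) :
    Tendsto (fun t => kernelMoment n (x t) (η t)) l (𝓝 (kernelMoment n x₀ η₀)) := by
  have hcont := continuousOn_kernelMoment
    (integrableOn_kernelWeight_of_nonneg hn (half_pos hx₀) le_rfl)
    (x₀, η₀) ⟨(half_lt_self hx₀).le, hη₀⟩
  refine hcont.tendsto.comp (tendsto_nhdsWithin_iff.2 ⟨hx.prodMk_nhds hη, ?_⟩)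
  filter_upwards [hx.eventually_const_lt (half_lt_self hx₀), hη_nonneg] with t hxt hηt
  exact ⟨hxt.le, hηt⟩

lemma kernelMoment_zero_right (m : ℕ) (hx : 0 < x) :
    kernelMoment m x 0 =
      (x / 2) ^ (-((m : ℝ) + 1) / 2) * (1 / 2) * Real.Gamma (((m : ℝ) + 1) / 2) := by
  rw [← integral_rpow_mul_exp_neg_mul_rpow two_pos (by linarith [m.cast_nonneg (α := ℝ)])
    (half_pos hx), kernelMoment]
  refine setIntegral_congr_fun measurableSet_Ioi fun v _ => ?_
  simp only [kernelWeight_zero_right, zpow_natCast, Real.rpow_natCast, Real.rpow_ofNat]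

lemma kernelMoment_zero_zero (hx : 0 < x) : kernelMoment 0 x 0 = √(Real.pi * x / 2) / x := by
  have hgauss : kernelMoment 0 x 0 = √(Real.pi / (x / 2)) / 2 := by
    rw [← integral_gaussian_Ioi, kernelMoment]
    simp only [kernelWeight_zero_right, zpow_zero, one_mul]
  have hsq : Real.pi / (x / 2) = Real.pi * x / 2 * (2 / x) ^ 2 := by field_simp
  rw [hgauss, hsq, Real.sqrt_mul (by positivity), Real.sqrt_sq (by positivity)]
  ring

lemma kernelMoment_one_zero (hx : 0 < x) : kernelMoment 1 x 0 = 1 / x := by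
  have h := kernelMoment_zero_right 1 hx
  norm_num [Real.rpow_neg_one] at h
  rw [h]
  field_simp

lemma kernelMoment_three_zero (hx : 0 < x) : kernelMoment 3 x 0 = 2 / x ^ 2 := by
  have h := kernelMoment_zero_right 3 hx
  norm_num [Real.rpow_neg (half_pos hx).le] at h
  rw [h]
  field_simp

lemma kernelMoment_one_ge (hx : 0 < x) (hη : 0 ≤ η) :
    1 / x - η * kernelMoment 0 x 0 ≤ kernelMoment 1 x η := by
  have hint {m : ℤ} {ζ : ℝ} (hm : 0 ≤ m) (hζ : 0 ≤ ζ) :=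
    integrableOn_kernelWeight_of_nonneg hm hx hζ
  rw [← kernelMoment_one_zero hx, kernelMoment, kernelMoment, kernelMoment, ← integral_const_mul,
    ← integral_sub (hint one_pos.le le_rfl) ((hint le_rfl le_rfl).const_mul η)]
  refine setIntegral_mono_on
    ((hint one_pos.le le_rfl).sub ((hint le_rfl le_rfl).const_mul η)) (hint one_pos.le hη)
    measurableSet_Ioi fun v (hv : 0 < v) => ?_
  have hweight : kernelWeight 1 x 0 v = v * kernelWeight 0 x 0 v := by
    simpa using kernelWeight_add 0 1 x 0 hv
  calc kernelWeight 1 x 0 v - η * kernelWeight 0 x 0 v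
      = (-(η / v) + 1) * kernelWeight 1 x 0 v := by
        rw [hweight]
        field_simp
        ring
    _ ≤ Real.exp (-(η / v)) * kernelWeight 1 x 0 v := by
        gcongr
        · exact (kernelWeight_pos _ _ _ hv).le
        · exact Real.add_one_le_exp _
    _ = kernelWeight 1 x η v := (kernelWeight_eq_exp_mul 1 x η v).symm

lemma tendsto_kernelMoment_one_atTop (hη : 0 ≤ η) :
    Tendsto (fun x => kernelMoment 1 x η) (𝓝[>] 0) atTop := by
  have hfactor : Tendsto (fun x => 1 - η * √(Real.pi * x / 2)) (𝓝[>] 0) (𝓝 1) := by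
    have hcont : Continuous fun x => 1 - η * √(Real.pi * x / 2) := by fun_prop
    simpa using (hcont.tendsto 0).mono_left nhdsWithin_le_nhds
  refine tendsto_atTop_mono' _ ?_ (tendsto_inv_nhdsGT_zero.atTop_mul_pos one_pos hfactor)
  filter_upwards [self_mem_nhdsWithin] with x hx
  calc x⁻¹ * (1 - η * √(Real.pi * x / 2)) = 1 / x - η * kernelMoment 0 x 0 := by
        rw [kernelMoment_zero_zero hx]
        ring
    _ ≤ kernelMoment 1 x η := kernelMoment_one_ge hx hη

end Kernel

section Tilted

/-- The mean of `a v² / 2 + p / v` under the probability density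
`v e^{−η/v − x v²/2} / C(x, η)`: minus the logarithmic derivative of `C` in direction `(a, p)`. -/
noncomputable def tiltedMean (a p x η : ℝ) : ℝ :=
  (a * kernelMoment 3 x η / 2 + p * kernelMoment 0 x η) / kernelMoment 1 x η

/-- The variance of `a v² / 2 + p / v` under the probability density
`v e^{−η/v − x v²/2} / C(x, η)`. -/
noncomputable def tiltedVar (a p x η : ℝ) : ℝ :=
  (a ^ 2 * kernelMoment 5 x η / 4 + a * p * kernelMoment 2 x η + p ^ 2 * kernelMoment (-1) x η) /
    kernelMoment 1 x η - tiltedMean a p x η ^ 2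

lemma eqOn_mul_kernelWeight_one (a p x η : ℝ) :
    EqOn (fun v => (a / 2 * v ^ 2 + p * v⁻¹) * kernelWeight 1 x η v)
      (fun v => a / 2 * kernelWeight 3 x η v + p * kernelWeight 0 x η v) (Ioi 0) := by
  intro v (hv : 0 < v)
  simp only [kernelWeight]
  field_simp

lemma eqOn_sq_mul_kernelWeight_one (a p x η : ℝ) :
    EqOn (fun v => (a / 2 * v ^ 2 + p * v⁻¹) ^ 2 * kernelWeight 1 x η v)
      (fun v => a ^ 2 / 4 * kernelWeight 5 x η v + a * p * kernelWeight 2 x η v +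
        p ^ 2 * kernelWeight (-1) x η v) (Ioi 0) := by
  intro v (hv : 0 < v)
  simp only [kernelWeight]
  field_simp
  ring

lemma tiltedVar_pos {a p x η : ℝ} (hx : 0 < x) (hη : 0 < η) (hap : a ≠ 0 ∨ p ≠ 0) :
    0 < tiltedVar a p x η := by
  have hint (n : ℤ) := integrableOn_kernelWeight n hx hη
  have hcont : ContinuousOn (fun v : ℝ => a / 2 * v ^ 2 + p * v⁻¹) (Ioi 0) := by
    have hinv : ContinuousOn (fun v : ℝ => v⁻¹) (Ioi 0) :=
      continuousOn_inv₀.mono fun v hv => ne_of_gt hv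
    fun_prop
  have hint₁ : IntegrableOn
      (fun v => a / 2 * kernelWeight 3 x η v + p * kernelWeight 0 x η v) (Ioi 0) :=
    ((hint 3).const_mul _).add ((hint 0).const_mul _)
  have hint₂ : IntegrableOn
      (fun v => a ^ 2 / 4 * kernelWeight 5 x η v + a * p * kernelWeight 2 x η v) (Ioi 0) :=
    ((hint 5).const_mul _).add ((hint 2).const_mul _)
  obtain ⟨y, z, hy, hz, hyz⟩ : ∃ y z : ℝ, 0 < y ∧ 0 < z ∧
      a / 2 * y ^ 2 + p * y⁻¹ ≠ a / 2 * z ^ 2 + p * z⁻¹ := by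
    by_contra! h
    have h₁₂ := h 1 2 one_pos two_pos
    have h₁₃ := h 1 3 one_pos three_pos
    rcases hap with ha | hp
    · exact ha (by linarith)
    · exact hp (by linarith)
  have hcs := sq_setIntegral_mul_lt isOpen_Ioi hcont (continuousOn_kernelWeight 1 x η)
    (fun v hv => kernelWeight_pos 1 x η hv) (hint 1)
    ((integrableOn_congr_fun (eqOn_mul_kernelWeight_one a p x η) measurableSet_Ioi).2 hint₁)
    ((integrableOn_congr_fun (eqOn_sq_mul_kernelWeight_one a p x η) measurableSet_Ioi).2
      (hint₂.add ((hint (-1)).const_mul _))) hy hz hyz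
  rw [setIntegral_congr_fun measurableSet_Ioi (eqOn_mul_kernelWeight_one a p x η),
    setIntegral_congr_fun measurableSet_Ioi (eqOn_sq_mul_kernelWeight_one a p x η),
    integral_add hint₂ ((hint (-1)).const_mul _),
    integral_add ((hint 5).const_mul _) ((hint 2).const_mul _),
    integral_add ((hint 3).const_mul _) ((hint 0).const_mul _)] at hcs
  simp only [integral_const_mul] at hcs
  have hpos := kernelMoment_pos 1 hx hη
  rw [tiltedVar, tiltedMean, div_pow, sub_pos, div_lt_div_iff₀ (by positivity) hpos]
  unfold kernelMoment at hpos ⊢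
  linear_combination (∫ v in Ioi (0 : ℝ), kernelWeight 1 x η v) * hcs

variable {x η : ℝ → ℝ} {a p t : ℝ}

lemma hasDerivAt_log_kernelMoment_one (hx : HasDerivAt x a t) (hη : HasDerivAt η p t)
    (hx0 : 0 < x t) (hη0 : 0 < η t) :
    HasDerivAt (fun s => Real.log (kernelMoment 1 (x s) (η s)))
      (-tiltedMean a p (x t) (η t)) t := by
  refine ((hasDerivAt_kernelMoment_comp 1 hx hη hx0 hη0).log
    (kernelMoment_pos 1 hx0 hη0).ne').congr_deriv ?_
  rw [tiltedMean, neg_div]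
  rfl

lemma hasDerivAt_tiltedMean {p : ℝ → ℝ} {q : ℝ} (hx : HasDerivAt x a t)
    (hη : HasDerivAt η (p t) t) (hp : HasDerivAt p q t) (hx0 : 0 < x t) (hη0 : 0 < η t) :
    HasDerivAt (fun s => tiltedMean a (p s) (x s) (η s))
      (q * (kernelMoment 0 (x t) (η t) / kernelMoment 1 (x t) (η t)) -
        tiltedVar a (p t) (x t) (η t)) t := by
  have hderiv (n : ℤ) := hasDerivAt_kernelMoment_comp n hx hη hx0 hη0
  have hpos := kernelMoment_pos 1 hx0 hη0
  refine ((((hderiv 3).const_mul a).div_const 2).add (hp.mul (hderiv 0))).div (hderiv 1) hpos.ne'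
    |>.congr_deriv ?_
  norm_num [tiltedVar, tiltedMean]
  field_simp
  ring

lemma tiltedMean_zero_right {x : ℝ} (a p : ℝ) (hx : 0 < x) :
    tiltedMean a p x 0 = a / x + p * √(Real.pi * x / 2) := by
  rw [tiltedMean, kernelMoment_three_zero hx, kernelMoment_zero_zero hx, kernelMoment_one_zero hx]
  field_simp

lemma tendsto_tiltedMean_zero_right {α : Type*} {l : Filter α} {x η : α → ℝ} {x₀ : ℝ} (a p : ℝ)
    (hx₀ : 0 < x₀) (hx : Tendsto x l (𝓝 x₀)) (hη : Tendsto η l (𝓝 0))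
    (hη_nonneg : ∀ᶠ t in l, 0 ≤ η t) :
    Tendsto (fun t => tiltedMean a p (x t) (η t)) l (𝓝 (a / x₀ + p * √(Real.pi * x₀ / 2))) := by
  have hlim {n : ℤ} (hn : 0 ≤ n) := tendsto_kernelMoment hn hx₀ le_rfl hx hη hη_nonneg
  have hone : kernelMoment 1 x₀ 0 ≠ 0 := by
    rw [kernelMoment_one_zero hx₀]
    positivity
  rw [← tiltedMean_zero_right a p hx₀]
  exact ((((hlim (by simp)).const_mul a).div_const 2).add ((hlim le_rfl).const_mul p)).div
    (hlim zero_le_one) hone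

end Tilted

section Fcal

variable {βL βR l η : ℝ}

lemma Fcal_eq_kernelMoment (βL βR l η : ℝ) :
    Fcal βL βR l η = βL * βR * kernelMoment 1 (βR + l) η * kernelMoment 1 (βL - l) η := by
  rw [Fcal, Ccal_eq_kernelMoment, Ccal_eq_kernelMoment]

lemma Fcal_reflect (βL βR l η : ℝ) : Fcal βL βR (βL - βR - l) η = Fcal βL βR l η := by
  rw [Fcal, Fcal, show βR + (βL - βR - l) = βL - l by ring,
    show βL - (βL - βR - l) = βR + l by ring]
  ring

lemma Fcal_pos (hβL : 0 < βL) (hβR : 0 < βR) (hl : l ∈ Ioo (-βR) βL) (hη : 0 < η) :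
    0 < Fcal βL βR l η := by
  have hR := kernelMoment_pos 1 (neg_lt_iff_pos_add'.1 hl.1) hη
  have hL := kernelMoment_pos 1 (sub_pos.2 hl.2) hη
  rw [Fcal_eq_kernelMoment]
  positivity

lemma Fcal_zero_zero (hβL : 0 < βL) (hβR : 0 < βR) : Fcal βL βR 0 0 = 1 := by
  rw [Fcal_eq_kernelMoment, add_zero, sub_zero, kernelMoment_one_zero hβL,
    kernelMoment_one_zero hβR]
  field_simp

lemma hasDerivAt_Fcal (βL βR : ℝ) (hl : l ∈ Ioo (-βR) βL) (hη : 0 < η) :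
    HasDerivAt (fun s => Fcal βL βR l s)
      (-(βL * βR * (kernelMoment 0 (βR + l) η * kernelMoment 1 (βL - l) η +
        kernelMoment 1 (βR + l) η * kernelMoment 0 (βL - l) η))) η := by
  have hderiv {x : ℝ} (hx : 0 < x) :=
    hasDerivAt_kernelMoment_comp 1 (hasDerivAt_const η x) (hasDerivAt_id η) hx hη
  simp only [Fcal_eq_kernelMoment]
  refine (((hderiv (neg_lt_iff_pos_add'.1 hl.1)).const_mul (βL * βR)).mul
    (hderiv (sub_pos.2 hl.2))).congr_deriv ?_
  norm_num
  ring

lemma deriv_Fcal_neg (hβL : 0 < βL) (hβR : 0 < βR) (hl : l ∈ Ioo (-βR) βL) (hη : 0 < η) :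
    deriv (fun s => Fcal βL βR l s) η < 0 := by
  have hR (n : ℤ) := kernelMoment_pos n (neg_lt_iff_pos_add'.1 hl.1) hη
  have hL (n : ℤ) := kernelMoment_pos n (sub_pos.2 hl.2) hη
  rw [(hasDerivAt_Fcal βL βR hl hη).deriv, neg_lt_zero]
  have := hR 0
  have := hR 1
  have := hL 0
  have := hL 1
  positivity

lemma strictAntiOn_Fcal (hβL : 0 < βL) (hβR : 0 < βR) (hl : l ∈ Ioo (-βR) βL) :
    StrictAntiOn (Fcal βL βR l) (Ioi 0) := by
  refine strictAntiOn_of_deriv_neg (convex_Ioi 0)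
    (fun η hη => (hasDerivAt_Fcal βL βR hl hη).continuousAt.continuousWithinAt) fun η hη => ?_
  rw [interior_Ioi] at hη
  exact deriv_Fcal_neg hβL hβR hl hη

lemma contDiffAt_Fcal (βL βR : ℝ) (hl : l ∈ Ioo (-βR) βL) (hη : 0 < η) :
    ContDiffAt ℝ ∞ (fun q : ℝ × ℝ => Fcal βL βR q.1 q.2) (l, η) := by
  have hR := (contDiffAt_kernelMoment 1 (p := (βR + l, η)) (neg_lt_iff_pos_add'.1 hl.1) hη).comp
    (l, η) (f := fun q : ℝ × ℝ => (βR + q.1, q.2)) (by fun_prop)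
  have hL := (contDiffAt_kernelMoment 1 (p := (βL - l, η)) (sub_pos.2 hl.2) hη).comp
    (l, η) (f := fun q : ℝ × ℝ => (βL - q.1, q.2)) (by fun_prop)
  simp only [Fcal_eq_kernelMoment]
  exact (contDiffAt_const.mul hR).mul hL

lemma hasDerivAt_log_Fcal {φ : ℝ → ℝ} {p : ℝ} (hβL : 0 < βL) (hβR : 0 < βR)
    (hl : l ∈ Ioo (-βR) βL) (hφ : HasDerivAt φ p l) (hφ0 : 0 < φ l) :
    HasDerivAt (fun s => Real.log (Fcal βL βR s (φ s)))
      (-(tiltedMean 1 p (βR + l) (φ l) + tiltedMean (-1) p (βL - l) (φ l))) l := by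
  have hR := hasDerivAt_log_kernelMoment_one ((hasDerivAt_id l).const_add βR) hφ
    (neg_lt_iff_pos_add'.1 hl.1) hφ0
  have hL := hasDerivAt_log_kernelMoment_one ((hasDerivAt_id l).const_sub βL) hφ
    (sub_pos.2 hl.2) hφ0
  refine (((hR.add hL).const_add (Real.log (βL * βR))).congr_of_eventuallyEq ?_).congr_deriv
    (neg_add _ _).symm
  filter_upwards [isOpen_Ioo.mem_nhds hl, hφ.continuousAt.eventually_const_lt hφ0] with s hs hφs
  have hRs := kernelMoment_pos 1 (neg_lt_iff_pos_add'.1 hs.1) hφs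
  have hLs := kernelMoment_pos 1 (sub_pos.2 hs.2) hφs
  rw [Fcal_eq_kernelMoment, Real.log_mul (by positivity) hLs.ne',
    Real.log_mul (by positivity) hRs.ne', add_assoc]
  rfl

lemma contDiffAt_of_Fcal_eq_one {φ : ℝ → ℝ} (hβL : 0 < βL) (hβR : 0 < βR)
    (hl : l ∈ Ioo (-βR) βL) (hφ : ∀ᶠ s in 𝓝 l, 0 < φ s ∧ Fcal βL βR s (φ s) = 1) :
    ContDiffAt ℝ ∞ φ l := by
  obtain ⟨hφ0, hFφ⟩ := hφ.self_of_nhds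
  refine contDiffAt_of_eventually_apply_eq (V := Ioi 0) (by simp) (contDiffAt_Fcal βL βR hl hφ0)
    (hasDerivAt_Fcal βL βR hl hφ0).differentiableAt.hasDerivAt
    (deriv_Fcal_neg hβL hβR hl hφ0).ne (Ioi_mem_nhds hφ0) ?_ ?_
  · filter_upwards [isOpen_Ioo.mem_nhds hl] with s hs using (strictAntiOn_Fcal hβL hβR hs).injOn
  · filter_upwards [hφ] with s hs using ⟨hs.1, hs.2.trans hFφ.symm⟩

lemma tiltedMean_add_eq_zero_of_Fcal_eq_one {φ : ℝ → ℝ} (hβL : 0 < βL) (hβR : 0 < βR)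
    (hl : l ∈ Ioo (-βR) βL) (hφ : ∀ᶠ s in 𝓝 l, 0 < φ s ∧ Fcal βL βR s (φ s) = 1) :
    tiltedMean 1 (deriv φ l) (βR + l) (φ l) + tiltedMean (-1) (deriv φ l) (βL - l) (φ l) = 0 := by
  have hlog : (fun s => Real.log (Fcal βL βR s (φ s))) =ᶠ[𝓝 l] fun _ => 0 := by
    filter_upwards [hφ] with s hs
    rw [hs.2, Real.log_one]
  have hφ' := ((contDiffAt_of_Fcal_eq_one hβL hβR hl hφ).differentiableAt (by simp)).hasDerivAt
  exact neg_eq_zero.1 ((hasDerivAt_log_Fcal hβL hβR hl hφ' hφ.self_of_nhds.1).unique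
    ((hasDerivAt_const l 0).congr_of_eventuallyEq hlog))

lemma deriv_deriv_pos_of_Fcal_eq_one {φ : ℝ → ℝ} (hβL : 0 < βL) (hβR : 0 < βR)
    (hl : l ∈ Ioo (-βR) βL) (hφ : ∀ᶠ s in 𝓝 l, 0 < φ s ∧ Fcal βL βR s (φ s) = 1) :
    0 < deriv (deriv φ) l := by
  have hsmooth := contDiffAt_of_Fcal_eq_one hβL hβR hl hφ
  have hmean : (fun s => tiltedMean 1 (deriv φ s) (βR + s) (φ s) +
      tiltedMean (-1) (deriv φ s) (βL - s) (φ s)) =ᶠ[𝓝 l] fun _ => 0 := by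
    filter_upwards [hφ.eventually_nhds, isOpen_Ioo.mem_nhds hl] with s hs hsl
    exact tiltedMean_add_eq_zero_of_Fcal_eq_one hβL hβR hsl hs
  have hφ0 := hφ.self_of_nhds.1
  have hR0 : 0 < βR + l := neg_lt_iff_pos_add'.1 hl.1
  have hL0 : 0 < βL - l := sub_pos.2 hl.2
  have hφ' : HasDerivAt φ (deriv φ l) l := (hsmooth.differentiableAt (by simp)).hasDerivAt
  have hφ'' : HasDerivAt (deriv φ) (deriv (deriv φ) l) l :=
    ((hsmooth.derivWithin (m := ∞) (by simp)).differentiableAt (by simp)).hasDerivAt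
  have hR := hasDerivAt_tiltedMean ((hasDerivAt_id l).const_add βR) hφ' hφ'' hR0 hφ0
  have hL := hasDerivAt_tiltedMean ((hasDerivAt_id l).const_sub βL) hφ' hφ'' hL0 hφ0
  have hzero := (hR.add hL).unique ((hasDerivAt_const l 0).congr_of_eventuallyEq hmean)
  have hvarR := tiltedVar_pos (p := deriv φ l) hR0 hφ0 (Or.inl one_ne_zero)
  have hvarL := tiltedVar_pos (p := deriv φ l) hL0 hφ0 (Or.inl (neg_ne_zero.2 one_ne_zero))
  have hratio {x : ℝ} (hx : 0 < x) : 0 < kernelMoment 0 x (φ l) / kernelMoment 1 x (φ l) :=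
    div_pos (kernelMoment_pos 0 hx hφ0) (kernelMoment_pos 1 hx hφ0)
  refine pos_of_mul_pos_left (b := kernelMoment 0 (βR + l) (φ l) / kernelMoment 1 (βR + l) (φ l) +
    kernelMoment 0 (βL - l) (φ l) / kernelMoment 1 (βL - l) (φ l)) ?_
    (add_pos (hratio hR0) (hratio hL0)).le
  rw [mul_add]
  simp only [id] at hzero
  linarith

lemma tendsto_Fcal_atTop (hβL : 0 < βL) (hβR : 0 < βR) (hη : 0 < η) :
    Tendsto (fun l => Fcal βL βR l η) (𝓝[<] βL) atTop := by
  have hsub : Tendsto (fun l => βL - l) (𝓝[<] βL) (𝓝[>] 0) := by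
    refine tendsto_nhdsWithin_iff.2 ⟨?_, ?_⟩
    · have hcont : Continuous fun l => βL - l := by fun_prop
      simpa using (hcont.tendsto βL).mono_left nhdsWithin_le_nhds
    · filter_upwards [self_mem_nhdsWithin] with l hl using sub_pos.2 (mem_Iio.1 hl)
  have hadd : Tendsto (fun l => βR + l) (𝓝[<] βL) (𝓝 (βR + βL)) :=
    (tendsto_id.mono_left nhdsWithin_le_nhds).const_add βR
  have hR := tendsto_kernelMoment zero_le_one (add_pos hβR hβL) hη.le hadd tendsto_const_nhds
    (Eventually.of_forall fun _ => hη.le)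
  simp only [Fcal_eq_kernelMoment]
  exact (hR.const_mul (βL * βR)).pos_mul_atTop
    (mul_pos (mul_pos hβL hβR) (kernelMoment_pos 1 (add_pos hβR hβL) hη))
    ((tendsto_kernelMoment_one_atTop hη.le).comp hsub)

/-- The critical current `j* = κ (T_L − T_R)`. -/
noncomputable def criticalCurrent (βL βR : ℝ) : ℝ :=
  (√(Real.pi * βL / 2) + √(Real.pi * βR / 2))⁻¹ * (1 / βL - 1 / βR)

lemma criticalCurrent_nonneg (hβL : 0 < βL) (hLR : βL ≤ βR) : 0 ≤ criticalCurrent βL βR :=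
  mul_nonneg (by positivity) (sub_nonneg.2 (one_div_le_one_div_of_le hβL hLR))

lemma continuousWithinAt_Fcal_mul {j : ℝ} (hβL : 0 < βL) (hβR : 0 < βR) (hj : 0 ≤ j) :
    ContinuousWithinAt (fun l => Fcal βL βR l (l * j)) (Ioi 0) 0 := by
  have hid : Tendsto (fun l : ℝ => l) (𝓝[>] 0) (𝓝 0) := nhdsWithin_le_nhds
  have hmul : Tendsto (fun l => l * j) (𝓝[>] 0) (𝓝 0) := by simpa using hid.mul_const j
  have hmul_nonneg : ∀ᶠ l in 𝓝[>] (0 : ℝ), 0 ≤ l * j := by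
    filter_upwards [self_mem_nhdsWithin] with l hl using mul_nonneg (le_of_lt hl) hj
  have hlim {x : ℝ → ℝ} {x₀ : ℝ} (hx₀ : 0 < x₀) (hx : Tendsto x (𝓝[>] 0) (𝓝 x₀)) :=
    tendsto_kernelMoment zero_le_one hx₀ le_rfl hx hmul hmul_nonneg
  simp only [ContinuousWithinAt, Fcal_eq_kernelMoment, zero_mul, add_zero, sub_zero]
  exact ((hlim hβR (by simpa using hid.const_add βR)).const_mul (βL * βR)).mul
    (hlim hβL (by simpa using hid.const_sub βL))

lemma eventually_Fcal_mul_lt_one {j : ℝ} (hβL : 0 < βL) (hβR : 0 < βR) (hj : 0 < j)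
    (hjcrit : criticalCurrent βL βR < j) :
    ∀ᶠ l in 𝓝[>] 0, Fcal βL βR l (l * j) < 1 := by
  have hid : Tendsto (fun l : ℝ => l) (𝓝[>] 0) (𝓝 0) := nhdsWithin_le_nhds
  have hadd : Tendsto (fun l => βR + l) (𝓝[>] 0) (𝓝 βR) := by simpa using hid.const_add βR
  have hsub : Tendsto (fun l => βL - l) (𝓝[>] 0) (𝓝 βL) := by simpa using hid.const_sub βL
  have hmul : Tendsto (fun l => l * j) (𝓝[>] 0) (𝓝 0) := by simpa using hid.mul_const j
  have hmul_pos : ∀ᶠ l in 𝓝[>] (0 : ℝ), 0 < l * j := by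
    filter_upwards [self_mem_nhdsWithin] with l hl using mul_pos hl hj
  have hmul_nonneg := hmul_pos.mono fun _ => le_of_lt
  have hmem : ∀ᶠ l in 𝓝[>] 0, l ∈ Ioo (-βR) βL :=
    nhdsWithin_le_nhds (Ioo_mem_nhds (neg_lt_zero.2 hβR) hβL)
  have hcont : ContinuousWithinAt (fun l => Real.log (Fcal βL βR l (l * j))) (Ioi 0) 0 :=
    (continuousWithinAt_Fcal_mul hβL hβR hj.le).log (by simp [Fcal_zero_zero hβL hβR])
  have hderiv : ∀ᶠ l in 𝓝[>] 0, HasDerivAt (fun l => Real.log (Fcal βL βR l (l * j)))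
      (-(tiltedMean 1 j (βR + l) (l * j) + tiltedMean (-1) j (βL - l) (l * j))) l := by
    filter_upwards [hmem, hmul_pos] with l hl hlj
    exact hasDerivAt_log_Fcal hβL hβR hl (hasDerivAt_mul_const j) hlj
  have hlim := ((tendsto_tiltedMean_zero_right 1 j hβR hadd hmul hmul_nonneg).add
    (tendsto_tiltedMean_zero_right (-1) j hβL hsub hmul hmul_nonneg)).neg
  have hneg : -(1 / βR + j * √(Real.pi * βR / 2) + (-1 / βL + j * √(Real.pi * βL / 2))) < 0 := by
    rw [criticalCurrent, inv_mul_lt_iff₀ (by positivity)] at hjcrit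
    rw [neg_div]
    linarith
  filter_upwards [eventually_lt_of_tendsto_deriv_neg hcont hderiv hlim hneg, hmem, hmul_pos]
    with l hlog hl hlj
  rw [zero_mul, Fcal_zero_zero hβL hβR] at hlog
  exact (Real.log_lt_log_iff (Fcal_pos hβL hβR hl hlj) one_pos).1 hlog

end Fcal

section Legendre

lemma legendre_le_coe_iff {f : ℝ → EReal} {j c : ℝ} :
    legendre f j ≤ c ↔ ∀ l : ℝ, ((l * j - c : ℝ) : EReal) ≤ f l := by
  refine iSup_le_iff.trans (forall_congr' fun l => ?_)
  induction f l with
  | bot =>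
    rw [EReal.coe_sub_bot, top_le_iff, le_bot_iff]
    exact iff_of_false (EReal.coe_ne_top c) (EReal.coe_ne_bot _)
  | top => simp
  | coe y =>
    rw [← EReal.coe_sub, EReal.coe_le_coe_iff, EReal.coe_le_coe_iff]
    exact sub_le_comm

lemma legendre_nonneg {f : ℝ → EReal} (h0 : f 0 ≤ 0) (j : ℝ) : 0 ≤ legendre f j :=
  le_iSup_of_le 0 (by simpa using h0)

variable {f : ℝ → EReal} {I : ℝ → ℝ}

lemma convexOn_of_legendre_eq_coe (hI : ∀ j, legendre f j = I j) : ConvexOn ℝ univ I := by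
  refine ⟨convex_univ, fun x _ y _ a b ha hb hab => ?_⟩
  have hle (j l : ℝ) : ((l * j - I j : ℝ) : EReal) ≤ f l := legendre_le_coe_iff.1 (hI j).le l
  rw [← EReal.coe_le_coe_iff, ← hI, legendre_le_coe_iff]
  intro l
  refine le_trans ?_ (max_le (hle x l) (hle y l))
  rw [← EReal.coe_strictMono.monotone.map_max, EReal.coe_le_coe_iff]
  refine le_trans (le_of_eq ?_) (Convex.combo_le_max _ _ ha hb hab)
  simp only [smul_eq_mul]
  ring

lemma legendre_neg_of_reflect {a : ℝ} (hI : ∀ j, legendre f j = I j)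
    (hf : ∀ l, f (a - l) = f l) (j : ℝ) : I (-j) = I j - a * j := by
  have hle (j : ℝ) : I (-j) ≤ I j - a * j := by
    rw [← EReal.coe_le_coe_iff, ← hI, legendre_le_coe_iff]
    intro l
    calc ((l * -j - (I j - a * j) : ℝ) : EReal) = (((a - l) * j - I j : ℝ) : EReal) := by
          congr 1
          ring
      _ ≤ f (a - l) := legendre_le_coe_iff.1 (hI j).le _
      _ = f l := hf l
  have hge := hle (-j)
  rw [neg_neg] at hge
  linarith [hle j]

lemma strictConvexOn_Iio_neg_of_reflect {a J : ℝ} (hI : ∀ j, I (-j) = I j - a * j)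
    (h : StrictConvexOn ℝ (Ioi J) I) : StrictConvexOn ℝ (Iio (-J)) I := by
  have hmem {j : ℝ} (hj : j ∈ Iio (-J)) : -j ∈ Ioi J := lt_neg_of_lt_neg (mem_Iio.1 hj)
  refine ⟨convex_Iio _, fun x hx y hy hxy s t hs ht hst => ?_⟩
  have hlt := h.2 (hmem hx) (hmem hy) (neg_injective.ne hxy) hs ht hst
  simp only [smul_eq_mul, mul_neg, ← neg_add, hI] at hlt ⊢
  linarith

lemma contDiffOn_Iio_neg_of_reflect {n : WithTop ℕ∞} {a J : ℝ} (hI : ∀ j, I (-j) = I j - a * j)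
    (h : ContDiffOn ℝ n I (Ioi J)) : ContDiffOn ℝ n I (Iio (-J)) := by
  have hcomp : ContDiffOn ℝ n (fun j => I (-j) + a * j) (Iio (-J)) :=
    (h.comp contDiff_neg.contDiffOn fun j hj => lt_neg_of_lt_neg (mem_Iio.1 hj)).add
      (contDiff_const.mul contDiff_id).contDiffOn
  exact hcomp.congr fun j _ => by rw [hI, sub_add_cancel]

/-- On `V`, the function `I` is the Legendre conjugate of `φ` restricted to `U`, and the supremum
defining it is attained in `U`. -/
structure IsConjugateOn (φ I : ℝ → ℝ) (U V : Set ℝ) : Prop where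
  mul_sub_le : ∀ l ∈ U, ∀ j ∈ V, l * j - φ l ≤ I j
  exists_eq : ∀ j ∈ V, ∃ l ∈ U, I j = l * j - φ l

namespace IsConjugateOn

variable {φ : ℝ → ℝ} {U V : Set ℝ}

lemma deriv_eq (h : IsConjugateOn φ I U V) (hU : IsOpen U) {l j : ℝ} (hl : l ∈ U) (hj : j ∈ V)
    (hφ : DifferentiableAt ℝ φ l) (heq : I j = l * j - φ l) : deriv φ l = j := by
  have hmax : IsLocalMax (fun s => s * j - φ s) l := by
    filter_upwards [hU.mem_nhds hl] with s hs using heq ▸ h.mul_sub_le s hs j hj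
  have hderiv := hmax.hasDerivAt_eq_zero ((hasDerivAt_mul_const j).sub hφ.hasDerivAt)
  linarith

lemma strictConvexOn (h : IsConjugateOn φ I U V) (hU : IsOpen U) (hV : Convex ℝ V)
    (hφ : ∀ l ∈ U, DifferentiableAt ℝ φ l) : StrictConvexOn ℝ V I := by
  refine ⟨hV, fun x hx y hy hxy a b ha hb hab => ?_⟩
  obtain ⟨l, hl, heq⟩ := h.exists_eq _ (hV hx hy ha.le hb.le hab)
  have hlt {w : ℝ} (hw : w ∈ V) (hne : w ≠ a • x + b • y) : l * w - φ l < I w := by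
    refine (h.mul_sub_le l hl w hw).lt_of_ne fun hwl => hne ?_
    rw [← h.deriv_eq hU hl hw (hφ l hl) hwl.symm,
      h.deriv_eq hU hl (hV hx hy ha.le hb.le hab) (hφ l hl) heq]
  have hx' := mul_lt_mul_of_pos_left
    (hlt hx fun h => hxy (left_mem_openSegment_iff.1 ⟨a, b, ha, hb, hab, h.symm⟩)) ha
  have hy' := mul_lt_mul_of_pos_left
    (hlt hy fun h => hxy (right_mem_openSegment_iff.1 ⟨a, b, ha, hb, hab, h.symm⟩)) hb
  calc I (a • x + b • y) = a * (l * x - φ l) + b * (l * y - φ l) := by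
        rw [heq, smul_eq_mul, smul_eq_mul]
        linear_combination φ l * hab
    _ < a • I x + b • I y := add_lt_add hx' hy'

lemma contDiffOn (h : IsConjugateOn φ I U V) (hU : IsOpen U) (hUc : Convex ℝ U) (hV : IsOpen V)
    (hφ : ∀ l ∈ U, ContDiffAt ℝ ∞ φ l) (hφ'' : ∀ l ∈ U, 0 < deriv (deriv φ) l) :
    ContDiffOn ℝ ∞ I V := by
  have hφ' : ∀ l ∈ U, ContDiffAt ℝ ∞ (deriv φ) l := fun l hl => (hφ l hl).derivWithin (by simp)
  have hinj : InjOn (deriv φ) U := by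
    refine (strictMonoOn_of_deriv_pos hUc
      (fun l hl => (hφ' l hl).continuousAt.continuousWithinAt) fun l hl => ?_).injOn
    exact hφ'' l (interior_subset hl)
  choose! m hmU hm using h.exists_eq
  have hderiv : ∀ j ∈ V, deriv φ (m j) = j := fun j hj =>
    h.deriv_eq hU (hmU j hj) hj ((hφ _ (hmU j hj)).differentiableAt (by simp)) (hm j hj)
  intro j hj
  have hmj := hmU j hj
  have hmsmooth : ContDiffAt ℝ ∞ m j := by
    refine contDiffAt_of_eventually_apply_eq (F := fun q : ℝ × ℝ => deriv φ q.2 - q.1) (by simp)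
      (((hφ' _ hmj).comp (j, m j) contDiffAt_snd).sub contDiffAt_fst)
      (((hφ' _ hmj).differentiableAt (by simp)).hasDerivAt.sub_const j) (hφ'' _ hmj).ne'
      (hU.mem_nhds hmj) (Eventually.of_forall fun y s hs t ht hst => ?_) ?_
    · exact hinj hs ht (sub_left_inj.1 hst)
    · filter_upwards [hV.mem_nhds hj] with y hy
      exact ⟨hmU y hy, by simp only [hderiv y hy, hderiv j hj, sub_self]⟩
  have hsmooth : ContDiffAt ℝ ∞ (fun y => m y * y - φ (m y)) j :=
    (hmsmooth.mul contDiffAt_id).sub ((hφ _ hmj).comp j hmsmooth)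
  refine (hsmooth.congr_of_eventuallyEq ?_).contDiffWithinAt
  filter_upwards [hV.mem_nhds hj] with y hy using hm y hy

end IsConjugateOn

end Legendre

section CumulantGeneratingFunction

/-- The set `(−β_R, β_L) ∖ [β_L−β_R, 0]` where the cumulant generating function is finite and
positive. -/
def activeDomain (βL βR : ℝ) : Set ℝ := Ioo (-βR) βL \ uIcc (βL - βR) 0

lemma isOpen_activeDomain (βL βR : ℝ) : IsOpen (activeDomain βL βR) :=
  isOpen_Ioo.sdiff isClosed_Icc

lemma Ioo_subset_activeDomain {βL βR : ℝ} (hβR : 0 ≤ βR) (hLR : βL ≤ βR) :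
    Ioo 0 βL ⊆ activeDomain βL βR := by
  refine fun l hl => ⟨⟨by linarith [hl.1], hl.2⟩, fun h => ?_⟩
  rw [uIcc_of_le (by linarith)] at h
  exact absurd hl.1 (not_lt.2 h.2)

namespace IsCGF

variable {βL βR l j : ℝ} {f : ℝ → EReal} (hf : IsCGF βL βR f)

include hf

lemma apply_zero : f 0 = 0 := hf.1 0 right_mem_uIcc

lemma nonneg (l : ℝ) : 0 ≤ f l := by
  obtain ⟨hzero, hactive, htop⟩ := hf
  by_cases hl : l ∈ Ioo (-βR) βL
  · by_cases hl' : l ∈ uIcc (βL - βR) 0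
    · exact (hzero l hl').ge
    · obtain ⟨η, hη, -, hfη⟩ := hactive l ⟨hl, hl'⟩
      exact hfη ▸ EReal.coe_nonneg.2 hη.le
  · exact htop l hl ▸ le_top

lemma toReal_spec (hl : l ∈ activeDomain βL βR) :
    0 < (f l).toReal ∧ Fcal βL βR l (f l).toReal = 1 ∧ f l = (f l).toReal := by
  obtain ⟨η, hη, hFη, hfη⟩ := hf.2.1 l hl
  rw [hfη, EReal.toReal_coe]
  exact ⟨hη, hFη, rfl⟩

lemma reflect (hβL : 0 < βL) (hβR : 0 < βR) (l : ℝ) : f (βL - βR - l) = f l := by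
  have hzero : βL - βR - l ∈ uIcc (βL - βR) 0 ↔ l ∈ uIcc (βL - βR) 0 := by
    simp only [mem_uIcc, sub_nonneg, sub_le_self_iff, sub_nonpos, le_sub_self_iff]
    tauto
  have hfin : βL - βR - l ∈ Ioo (-βR) βL ↔ l ∈ Ioo (-βR) βL := by
    simp only [mem_Ioo]
    constructor <;> rintro ⟨h₁, h₂⟩ <;> constructor <;> linarith
  by_cases hl : l ∈ Ioo (-βR) βL
  swap
  · rw [hf.2.2 l hl, hf.2.2 _ (hfin.not.2 hl)]
  by_cases hl0 : l ∈ uIcc (βL - βR) 0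
  · rw [hf.1 l hl0, hf.1 _ (hzero.2 hl0)]
  obtain ⟨hpos, hF, heq⟩ := hf.toReal_spec ⟨hl, hl0⟩
  obtain ⟨hpos', hF', heq'⟩ := hf.toReal_spec ⟨hfin.2 hl, hzero.not.2 hl0⟩
  rw [Fcal_reflect] at hF'
  rw [heq, heq', (strictAntiOn_Fcal hβL hβR hl).injOn hpos' hpos (hF'.trans hF.symm)]

lemma eventually_Fcal_toReal_eq_one (hl : l ∈ activeDomain βL βR) :
    ∀ᶠ s in 𝓝 l, 0 < (f s).toReal ∧ Fcal βL βR s (f s).toReal = 1 := by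
  filter_upwards [(isOpen_activeDomain βL βR).mem_nhds hl] with s hs
  exact ⟨(hf.toReal_spec hs).1, (hf.toReal_spec hs).2.1⟩

lemma contDiffAt_toReal (hβL : 0 < βL) (hβR : 0 < βR) (hl : l ∈ activeDomain βL βR) :
    ContDiffAt ℝ ∞ (fun s => (f s).toReal) l :=
  contDiffAt_of_Fcal_eq_one hβL hβR hl.1 (hf.eventually_Fcal_toReal_eq_one hl)

lemma deriv_deriv_toReal_pos (hβL : 0 < βL) (hβR : 0 < βR) (hl : l ∈ activeDomain βL βR) :
    0 < deriv (deriv fun s => (f s).toReal) l :=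
  deriv_deriv_pos_of_Fcal_eq_one hβL hβR hl.1 (hf.eventually_Fcal_toReal_eq_one hl)

lemma tendsto_toReal_atTop (hβL : 0 < βL) (hLR : βL ≤ βR) :
    Tendsto (fun l => (f l).toReal) (𝓝[<] βL) atTop := by
  have hβR := hβL.trans_le hLR
  refine tendsto_atTop.2 fun M => ?_
  have hM : 0 < max M 1 := lt_max_of_lt_right one_pos
  filter_upwards [(tendsto_Fcal_atTop hβL hβR hM).eventually_gt_atTop 1, Ioo_mem_nhdsLT hβL]
    with l hl hl0
  have hact := Ioo_subset_activeDomain hβR.le hLR hl0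
  obtain ⟨hpos, hF, -⟩ := hf.toReal_spec hact
  exact (le_max_left M 1).trans
    (((strictAntiOn_Fcal hβL hβR hact.1).lt_iff_gt hpos hM).1 (hF.trans_lt hl)).le

lemma eventually_toReal_lt_mul (hβL : 0 < βL) (hLR : βL ≤ βR) (hj : criticalCurrent βL βR < j) :
    ∀ᶠ l in 𝓝[>] 0, (f l).toReal < l * j := by
  have hβR := hβL.trans_le hLR
  have hj0 : 0 < j := (criticalCurrent_nonneg hβL hLR).trans_lt hj
  filter_upwards [eventually_Fcal_mul_lt_one hβL hβR hj0 hj, Ioo_mem_nhdsGT hβL] with l hl hl0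
  have hact := Ioo_subset_activeDomain hβR.le hLR hl0
  obtain ⟨hpos, hF, -⟩ := hf.toReal_spec hact
  exact ((strictAntiOn_Fcal hβL hβR hact.1).lt_iff_gt (mul_pos hl0.1 hj0) hpos).1
    (hl.trans_eq hF.symm)

lemma legendre_le (j : ℝ) : legendre f j ≤ ((max |βL| |βR| * |j| : ℝ) : EReal) := by
  refine legendre_le_coe_iff.2 fun l => ?_
  by_cases hl : l ∈ Ioo (-βR) βL
  · refine le_trans (EReal.coe_nonpos.2 (sub_nonpos.2 ?_)) (hf.nonneg l)
    calc l * j ≤ |l| * |j| := (le_abs_self _).trans_eq (abs_mul l j)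
      _ ≤ max |βL| |βR| * |j| := by
        gcongr
        refine abs_le'.2 ⟨?_, ?_⟩
        · exact hl.2.le.trans ((le_abs_self _).trans (le_max_left _ _))
        · exact (neg_le.1 hl.1.le).trans ((le_abs_self _).trans (le_max_right _ _))
  · exact hf.2.2 l hl ▸ le_top

lemma coe_toReal_legendre (j : ℝ) : ((legendre f j).toReal : EReal) = legendre f j :=
  EReal.coe_toReal (ne_top_of_le_ne_top (EReal.coe_ne_top _) (hf.legendre_le j))
    (ne_bot_of_le_ne_bot EReal.zero_ne_bot (legendre_nonneg hf.apply_zero.le j))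

lemma exists_isMaxOn (hβL : 0 < βL) (hLR : βL ≤ βR) (hj : criticalCurrent βL βR < j) :
    ∃ l ∈ Ioo 0 βL, IsMaxOn (fun s => s * j - (f s).toReal) (Ioo 0 βL) l ∧
      0 < l * j - (f l).toReal := by
  have hact := Ioo_subset_activeDomain (hβL.trans_le hLR).le hLR
  have hj0 : 0 < j := (criticalCurrent_nonneg hβL hLR).trans_lt hj
  have hcont : ContinuousOn (fun s => s * j - (f s).toReal) (Ioo 0 βL) := by
    refine (continuousOn_id.mul continuousOn_const).sub fun s hs => ?_
    exact (hf.contDiffAt_toReal hβL (hβL.trans_le hLR) (hact hs)).continuousAt.continuousWithinAt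
  obtain ⟨l₀, hl₀, hl₀mem⟩ :=
    ((hf.eventually_toReal_lt_mul hβL hLR hj).and (Ioo_mem_nhdsGT hβL)).exists
  have hleft : ∀ᶠ s in 𝓝[>] 0, s * j - (f s).toReal ≤ l₀ * j - (f l₀).toReal := by
    have hlim : Tendsto (fun s : ℝ => s * j) (𝓝[>] 0) (𝓝 0) := by
      simpa using ((continuous_mul_const j).tendsto 0).mono_left nhdsWithin_le_nhds
    filter_upwards [hlim.eventually_lt_const (sub_pos.2 hl₀), Ioo_mem_nhdsGT hβL] with s hs hs0
    linarith [(hf.toReal_spec (hact hs0)).1]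
  have hright : ∀ᶠ s in 𝓝[<] βL, s * j - (f s).toReal ≤ l₀ * j - (f l₀).toReal := by
    filter_upwards [(hf.tendsto_toReal_atTop hβL hLR).eventually_ge_atTop
      (βL * j - (l₀ * j - (f l₀).toReal)), self_mem_nhdsWithin] with s hs hsβ
    have : s * j ≤ βL * j := mul_le_mul_of_nonneg_right (le_of_lt hsβ) hj0.le
    linarith
  obtain ⟨l, hl, hmax⟩ := exists_isMaxOn_Ioo_of_eventually_le hcont hl₀mem hleft hright
  exact ⟨l, hl, hmax, (sub_pos.2 hl₀).trans_le (hmax hl₀mem)⟩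

lemma mul_sub_toReal_le {I : ℝ → ℝ} (hI : ∀ j, legendre f j = I j) (hl : l ∈ activeDomain βL βR)
    (j : ℝ) : l * j - (f l).toReal ≤ I j := by
  have hle := legendre_le_coe_iff.1 (hI j).le l
  rw [(hf.toReal_spec hl).2.2, EReal.coe_le_coe_iff] at hle
  exact sub_le_comm.1 hle

lemma isConjugateOn {I : ℝ → ℝ} (hβL : 0 < βL) (hLR : βL ≤ βR) (hI : ∀ j, legendre f j = I j) :
    IsConjugateOn (fun l => (f l).toReal) I (Ioo 0 βL) (Ioi (criticalCurrent βL βR)) where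
  mul_sub_le l hl j _ :=
    hf.mul_sub_toReal_le hI (Ioo_subset_activeDomain (hβL.trans_le hLR).le hLR hl) j
  exists_eq j hj := by
    have hact := Ioo_subset_activeDomain (hβL.trans_le hLR).le hLR
    have hj0 : 0 < j := (criticalCurrent_nonneg hβL hLR).trans_lt hj
    obtain ⟨l, hl, hmax, hpos⟩ := hf.exists_isMaxOn hβL hLR hj
    refine ⟨l, hl, le_antisymm ?_ ?_⟩
    · rw [← EReal.coe_le_coe_iff, ← hI, legendre_le_coe_iff]
      intro s
      rcases le_or_gt s 0 with hs | hs
      · refine le_trans (EReal.coe_nonpos.2 ?_) (hf.nonneg s)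
        linarith [mul_nonpos_of_nonpos_of_nonneg hs hj0.le]
      rcases lt_or_ge s βL with hsβ | hsβ
      · rw [(hf.toReal_spec (hact ⟨hs, hsβ⟩)).2.2, EReal.coe_le_coe_iff]
        exact sub_le_comm.1 (hmax ⟨hs, hsβ⟩)
      · exact hf.2.2 s (fun h => h.2.not_ge hsβ) ▸ le_top
    · exact hf.mul_sub_toReal_le hI (hact hl) j

end IsCGF

end CumulantGeneratingFunction

/-- The Legendre transform `I` of the cumulant generating function is nonnegative, convex
and finite on all of `ℝ`, and is infinitely differentiable and strictly convex outside
`[−j*, j*]`, where `j* = κ(T_L − T_R)`. -/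
theorem legendre_cgf_regularity
    (βL βR TL TR κ jstar : ℝ) (hβL : 0 < βL) (hLR : βL ≤ βR)
    (hTL : TL = 1 / βL) (hTR : TR = 1 / βR)
    (hκ : κ = (Real.sqrt (Real.pi * βL / 2) + Real.sqrt (Real.pi * βR / 2))⁻¹)
    (hjstar : jstar = κ * (TL - TR))
    (f : ℝ → EReal) (hf : IsCGF βL βR f) :
    ∃ I : ℝ → ℝ,
      (∀ j : ℝ, legendre f j = ((I j : ℝ) : EReal)) ∧
      (∀ j : ℝ, 0 ≤ I j) ∧
      ConvexOn ℝ Set.univ I ∧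
      ContDiffOn ℝ (⊤ : ℕ∞) I (Set.Icc (-jstar) jstar)ᶜ ∧
      StrictConvexOn ℝ (Set.Iio (-jstar)) I ∧
      StrictConvexOn ℝ (Set.Ioi jstar) I := by
  have hβR := hβL.trans_le hLR
  obtain rfl : jstar = criticalCurrent βL βR := by rw [hjstar, hκ, hTL, hTR, criticalCurrent]
  set I : ℝ → ℝ := fun j => (legendre f j).toReal
  have hI : ∀ j, legendre f j = I j := fun j => (hf.coe_toReal_legendre j).symm
  have hconj := hf.isConjugateOn hβL hLR hI
  have hact := Ioo_subset_activeDomain hβR.le hLR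
  have hreflect := legendre_neg_of_reflect hI (hf.reflect hβL hβR)
  have hsmooth : ContDiffOn ℝ ∞ I (Ioi (criticalCurrent βL βR)) :=
    hconj.contDiffOn isOpen_Ioo (convex_Ioo 0 βL) isOpen_Ioi
      (fun l hl => hf.contDiffAt_toReal hβL hβR (hact hl))
      (fun l hl => hf.deriv_deriv_toReal_pos hβL hβR (hact hl))
  have hstrict : StrictConvexOn ℝ (Ioi (criticalCurrent βL βR)) I :=
    hconj.strictConvexOn isOpen_Ioo (convex_Ioi _) fun l hl =>
      (hf.contDiffAt_toReal hβL hβR (hact hl)).differentiableAt (by simp)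
  refine ⟨I, hI, fun j => EReal.toReal_nonneg (legendre_nonneg hf.apply_zero.le j),
    convexOn_of_legendre_eq_coe hI, ?_, strictConvexOn_Iio_neg_of_reflect hreflect hstrict, hstrict⟩
  rw [← Ici_inter_Iic, compl_inter, compl_Ici, compl_Iic]
  exact (contDiffOn_Iio_neg_of_reflect hreflect hsmooth).union_of_isOpen hsmooth isOpen_Iio
    isOpen_Ioi
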